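/- arXiv:1708.00624 — 3 statements merged into one kernel-verified Lean document; each statement's English description precedes it below -/
import Mathlib

section
/- Let p be a prime number. Then every caterpillar whose spine has order p, p-1, or p-2 is 1-antimagic. -/
/-!
Since a star or a double star is also covered by `p = 3`, let `p` be odd. A spine of order `p`,
`p - 1` or `p - 2` can be prolonged by at most two leaves to a path `P` on exactly `p` vertices, and
every vertex off `P` is a leaf attached to `P`. If `L` edges lie off `P`, label them `1, …, L`
arbitrarily and label the path edges from `L + 1, …, L + p`. The sum at a leaf off `P` is then its
own label, at most `L`, while every vertex of `P` has sum larger than `L`. So it suffices that the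
vertex sums on `P` be distinct, and these are path sums plus fixed weights `w`.

This is done modulo `p` (`exists_path_labeling`). For path labels `y₁, …, y_{p-1}` in `ZMod p` with
path sums `s`, consider `V(y) V(s + w)`, with `V` the Vandermonde product. It is a polynomial of
degree at most `(p - 1)²` in `p - 1` variables, so the sum of its values over all `y` depends only
on its part of degree `(p - 1)²`, and hence not on `w` (`sum_indep`). For `w = 0`, put `x = (0, y)`;
then `sᵢ = xᵢ + xᵢ₊₁` cyclically. Where `V(y) V(s)` does not vanish, the residue missed by `y` is
`0` (`prod_eq`), so `V(x) V(s) = κ V(y) V(s)` for all `y`, with `κ` the product of the nonzero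
residues. The product `V(x) V(s)` is invariant under the rotation `xᵢ ↦ xᵢ₊₁ - x₁` of order `p`,
whence modulo `p` only the fixed points `xᵢ = b i` contribute to its sum, and together they give a
nonzero value (`sum_phi_ne_zero`). So some `y` has `V(y) V(s + w) ≠ 0`, that is, distinct labels and
distinct weighted sums.
-/

open Finset SimpleGraph
open scoped Classical

variable {V : Type*}

/-- The spine of a graph: the set of its non-leaf vertices (for a tree of order at
least 3, these are exactly the vertices of degree at least 2). -/
noncomputable def SimpleGraph.spine [Fintype V] (G : SimpleGraph V) : Set V :=
  {v | 2 ≤ G.degree v}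

/-- The order of the spine, i.e., its number of vertices. -/
noncomputable def SimpleGraph.spineOrder [Fintype V] (G : SimpleGraph V) : ℕ :=
  Nat.card G.spine

/-- A caterpillar is a tree of order at least 3 such that removing all of its leaves
produces a path (i.e., the subgraph induced on the non-leaf vertices is a path graph). -/
def SimpleGraph.IsCaterpillar [Fintype V] (G : SimpleGraph V) : Prop :=
  G.IsTree ∧ 3 ≤ Fintype.card V ∧
    Nonempty ((G.induce G.spine) ≃g pathGraph G.spineOrder)

/-- The vertex sum at `v` of an edge labeling `f`: the sum of the labels of the
edges incident to `v`. -/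
noncomputable def SimpleGraph.vertexSum [Fintype V] (G : SimpleGraph V)
    (f : Sym2 V → ℕ) (v : V) : ℕ :=
  ∑ e ∈ G.incidenceFinset v, f e

/-- A graph `G` is `k`-antimagic if there is an injection from its edge set to
`{1, 2, ..., |E(G)| + k}` such that all vertex sums are pairwise distinct. -/
def SimpleGraph.IsAntimagic [Fintype V] (G : SimpleGraph V) (k : ℕ) : Prop :=
  ∃ f : Sym2 V → ℕ,
    (∀ e ∈ G.edgeFinset, f e ∈ Finset.Icc 1 (G.edgeFinset.card + k)) ∧
    Set.InjOn f ↑G.edgeFinset ∧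
    Function.Injective (G.vertexSum f)

namespace CaterpillarPrime

/-! ### Vandermonde products and cyclic sums -/

/-- The Vandermonde determinant of `v`; over a field it is nonzero exactly when `v` is injective. -/
def vand {R : Type*} [CommRing R] {m : ℕ} (v : Fin m → R) : R := (Matrix.vandermonde v).det

/-- `x₀ = 0` prepended to the labels `y` of the path edges; it stands for the absent edge before
the first and, cyclically, after the last vertex. -/
def ext {R : Type*} [CommRing R] {n : ℕ} (y : Fin n → R) : Fin (n + 1) → R := Fin.cons 0 y

/-- Cyclic vertex sums `xᵢ + xᵢ₊₁`. For `x = ext y` these are the vertex sums of the path on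
`n + 1` vertices whose edges are labelled by `y`. -/
def cyc {R : Type*} [CommRing R] {n : ℕ} (x : Fin (n + 1) → R) : Fin (n + 1) → R :=
  fun i => x i + x (i + 1)

lemma vand_comp {R : Type*} [CommRing R] {m : ℕ} (v : Fin m → R) (σ : Equiv.Perm (Fin m)) :
    vand (fun i => v (σ i)) = (Equiv.Perm.sign σ : ℤ) * vand v := by
  unfold vand
  rw [← Matrix.det_permute]
  rfl

lemma vand_sub {R : Type*} [CommRing R] {m : ℕ} (v : Fin m → R) (a : R) :
    vand (fun i => v i - a) = vand v := Matrix.det_vandermonde_sub v a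

lemma vand_mul {R : Type*} [CommRing R] {m : ℕ} (v : Fin m → R) (b : R) :
    vand (fun i => b * v i) = (∏ j : Fin m, b ^ (j : ℕ)) * vand v := by
  unfold vand
  rw [← Matrix.det_mul_row]
  congr 1
  ext i j
  simp [Matrix.vandermonde_apply, mul_pow]

lemma vand_ext {R : Type*} [CommRing R] {n : ℕ} (y : Fin n → R) :
    vand (ext y) = (∏ i, y i) * vand y := by
  unfold vand ext
  rw [Matrix.det_vandermonde, Matrix.det_vandermonde, Fin.prod_univ_succ, Fin.prod_Ioi_zero]
  congr 1
  · simp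
  · refine Finset.prod_congr rfl fun i _ => ?_
    rw [Fin.prod_Ioi_succ]
    simp

/-- In characteristic `p`, a function invariant under a self-map `τ` with `τ^[p] = id` has the
same sum over all points as over the fixed points of `τ`. -/
lemma sum_eq_sum_fixed {α : Type*} [Fintype α] [DecidableEq α] {p : ℕ} [Fact p.Prime] (τ : α → α)
    (hτ : τ^[p] = id) (Φ : α → ZMod p) (hΦ : ∀ a, Φ (τ a) = Φ a) :
    ∑ a, Φ a = ∑ a with τ a = a, Φ a := by
  rw [← Finset.sum_fiberwise univ Φ Φ, ← Finset.sum_fiberwise (univ.filter fun a => τ a = a) Φ Φ]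
  refine Finset.sum_congr rfl fun c _ => ?_
  have h1 : ∀ s : Finset α, ∑ a ∈ s with Φ a = c, Φ a = ((s.filter fun a => Φ a = c).card : ZMod p) * c := by
    intro s
    rw [Finset.sum_congr rfl (g := fun _ => c) (fun a ha => (Finset.mem_filter.1 ha).2)]
    simp
  rw [h1, h1]
  congr 1
  let f : Function.End {a : α // Φ a = c} := fun a => ⟨τ a.1, by rw [hΦ]; exact a.2⟩
  have hf : f ^ p ^ 1 = 1 := by
    have key : ∀ k : ℕ, ∀ a, ((f ^ k) a).1 = τ^[k] a.1 := by
      intro k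
      induction k with
      | zero => intro a; rfl
      | succ k ih =>
        intro a
        rw [pow_succ', Function.iterate_succ_apply', ← ih a]
        rfl
    funext a
    apply Subtype.ext
    rw [pow_one, key, hτ]
    rfl
  have h2 := Equiv.Perm.card_fixedPoints_modEq hf
  rw [← ZMod.natCast_eq_natCast_iff] at h2
  rw [Fintype.card_subtype] at h2
  rw [h2]
  congr 1
  rw [Finset.filter_filter, ← Fintype.card_subtype]
  refine Fintype.card_congr
    { toFun := fun a => ⟨a.1.1, congrArg Subtype.val a.2, a.1.2⟩
      invFun := fun a => ⟨⟨a.1, a.2.2⟩, Subtype.ext a.2.1⟩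
      left_inv := fun _ => rfl
      right_inv := fun _ => rfl }

/-! ### Independence of the weights -/

section Poly
open MvPolynomial

/-- Shifting linear factors by constants changes a product only in lower degrees. -/
lemma totalDegree_prod_sub_lt {K ι σ : Type*} [Field K] (T : Finset ι)
    (ℓ : ι → MvPolynomial σ K) (c : ι → K) (hℓ : ∀ i ∈ T, (ℓ i).totalDegree ≤ 1) :
    T = ∅ ∨ (∏ i ∈ T, (ℓ i + C (c i)) - ∏ i ∈ T, ℓ i).totalDegree < T.card := by
  induction T using Finset.induction_on with
  | empty => exact Or.inl rfl
  | insert a T ha ih =>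
    right
    rw [Finset.prod_insert ha, Finset.prod_insert ha, Finset.card_insert_of_notMem ha]
    have e : (ℓ a + C (c a)) * ∏ i ∈ T, (ℓ i + C (c i)) - ℓ a * ∏ i ∈ T, ℓ i
        = (ℓ a + C (c a)) * (∏ i ∈ T, (ℓ i + C (c i)) - ∏ i ∈ T, ℓ i) + C (c a) * ∏ i ∈ T, ℓ i := by
      ring
    rw [e, Nat.lt_succ_iff]
    have hT : ∀ i ∈ T, (ℓ i).totalDegree ≤ 1 := fun i hi => hℓ i (Finset.mem_insert_of_mem hi)
    refine (totalDegree_add _ _).trans (max_le ?_ ?_)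
    · rcases ih hT with rfl | h
      · simp
      · refine (totalDegree_mul _ _).trans ?_
        have h1 : (ℓ a + C (c a)).totalDegree ≤ 1 :=
          (totalDegree_add _ _).trans (max_le (hℓ a (Finset.mem_insert_self _ _)) (by simp))
        omega
    · refine (totalDegree_mul _ _).trans ?_
      have h2 : (∏ i ∈ T, ℓ i).totalDegree ≤ T.card := by
        refine (totalDegree_finsetProd _ _).trans ?_
        exact (Finset.sum_le_card_nsmul _ _ 1 hT).trans (by simp)
      simpa using h2

/-- The pairs `i < j` in `Fin m`, indexing the factors of a Vandermonde determinant. -/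
def pairs (m : ℕ) : Finset (Σ _ : Fin m, Fin m) := univ.sigma fun i => Ioi i

lemma vand_eq_prod {R : Type*} [CommRing R] {m : ℕ} (v : Fin m → R) :
    vand v = ∏ t ∈ pairs m, (v t.2 - v t.1) := by
  unfold vand pairs
  rw [Matrix.det_vandermonde, Finset.prod_sigma]

lemma card_pairs_succ (m : ℕ) : (pairs (m + 1)).card = m + (pairs m).card := by
  unfold pairs
  rw [Finset.card_sigma, Finset.card_sigma, Fin.sum_univ_succ]
  congr 1
  · simp
  · refine Finset.sum_congr rfl fun i _ => ?_
    simp only [Fin.card_Ioi, Fin.val_succ]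
    omega

lemma card_pairs_add (n : ℕ) : (pairs n).card + (pairs (n + 1)).card = n * n := by
  induction n with
  | zero => rfl
  | succ n ih =>
    rw [card_pairs_succ (n + 1), card_pairs_succ n]
    rw [card_pairs_succ n] at ih
    linarith [ih, (by ring : (n + 1) * (n + 1) = n * n + 2 * n + 1)]

lemma vand_map {R S : Type*} [CommRing R] [CommRing S] (f : R →+* S) {m : ℕ} (v : Fin m → R) :
    f (vand v) = vand (fun i => f (v i)) := by
  rw [vand_eq_prod, vand_eq_prod, map_prod]
  simp

/-- The polynomial `V(y) V(s + w)` in `n` variables over `ZMod (n + 1)` has degree at most `n²`,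
and only its part of degree `n²`, which does not involve `w`, contributes to the sum of its
values. -/
lemma sum_indep {n : ℕ} [Fact (n + 1).Prime] (hn : 0 < n) (w : Fin (n + 1) → ZMod (n + 1)) :
    ∑ y : Fin n → ZMod (n + 1), vand y * vand (fun i => cyc (ext y) i + w i)
      = ∑ y : Fin n → ZMod (n + 1), vand y * vand (cyc (ext y)) := by
  rw [← sub_eq_zero, ← Finset.sum_sub_distrib]
  let S : Fin (n + 1) → MvPolynomial (Fin n) (ZMod (n + 1)) := cyc (ext X)
  let P : MvPolynomial (Fin n) (ZMod (n + 1)) :=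
    vand X * (vand (fun i => S i + C (w i)) - vand S)
  have hx : ∀ (y : Fin n → ZMod (n + 1)) i, eval y (ext X i) = ext y i := by
    intro y i
    refine Fin.cases ?_ (fun j => ?_) i
    · simp [ext]
    · simp [ext]
  have hS : ∀ (y : Fin n → ZMod (n + 1)) i, eval y (S i) = cyc (ext y) i := by
    intro y i
    simp only [S, cyc, map_add, hx]
  have hP : ∀ y, eval y P = vand y * vand (fun i => cyc (ext y) i + w i)
      - vand y * vand (cyc (ext y)) := by
    intro y
    simp only [P, map_mul, map_sub, vand_map, map_add, hS, eval_X, eval_C]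
    ring
  rw [← Finset.sum_congr rfl (fun y _ => hP y)]
  apply MvPolynomial.sum_eval_eq_zero
  rw [ZMod.card, Fintype.card_fin, Nat.add_sub_cancel, ← card_pairs_add]
  have hxd : ∀ i, (ext X i : MvPolynomial (Fin n) (ZMod (n + 1))).totalDegree ≤ 1 := by
    intro i
    refine Fin.cases ?_ (fun j => ?_) i
    · simp [ext]
    · simp [ext]
  have hSd : ∀ i, (S i).totalDegree ≤ 1 := fun i =>
    (totalDegree_add _ _).trans (max_le (hxd _) (hxd _))
  have h1 : (vand X : MvPolynomial (Fin n) (ZMod (n + 1))).totalDegree ≤ (pairs n).card := by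
    rw [vand_eq_prod]
    refine (totalDegree_finsetProd _ _).trans ?_
    refine (Finset.sum_le_card_nsmul _ _ 1 fun t _ => ?_).trans (by simp)
    exact (totalDegree_sub _ _).trans (max_le (by simp) (by simp))
  have h2 : (vand (fun i => S i + C (w i)) - vand S).totalDegree < (pairs (n + 1)).card := by
    have := totalDegree_prod_sub_lt (pairs (n + 1)) (fun t => S t.2 - S t.1)
      (fun t => w t.2 - w t.1)
      (fun t _ => (totalDegree_sub _ _).trans (max_le (hSd _) (hSd _)))
    rcases this with h | h
    · have := card_pairs_succ n
      rw [h] at this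
      simp at this
      omega
    · rw [vand_eq_prod, vand_eq_prod]
      convert h using 4
      rw [C_sub]
      ring
  exact (totalDegree_mul _ _).trans_lt (by omega)

end Poly

/-! ### The rotation action and the unweighted sum -/

/-- The rotation `x ↦ (i ↦ xᵢ₊₁ - x₁)` of sequences with `x₀ = 0`, in terms of `y = (x₁, …, xₙ)`. -/
def rot {R : Type*} [CommRing R] {n : ℕ} (y : Fin n → R) : Fin n → R :=
  fun i => ext y (i.succ + 1) - ext y 1

lemma ext_rot {R : Type*} [CommRing R] {n : ℕ} (y : Fin n → R) (j : Fin (n + 1)) :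
    ext (rot y) j = ext y (j + 1) - ext y 1 := by
  refine Fin.cases ?_ (fun i => ?_) j
  · simp [ext]
  · rfl

lemma ext_injective {R : Type*} [CommRing R] {n : ℕ} :
    Function.Injective (ext : (Fin n → R) → Fin (n + 1) → R) :=
  fun _ _ h => funext fun i => congrFun h i.succ

lemma ext_rot_iterate {R : Type*} [CommRing R] {n : ℕ} (k : ℕ) (y : Fin n → R) (j : Fin (n + 1)) :
    ext (rot^[k] y) j = ext y (j + (Fin.ofNat (n + 1) k)) - ext y (Fin.ofNat (n + 1) k) := by
  induction k generalizing j with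
  | zero =>
    have : Fin.ofNat (n + 1) 0 = 0 := rfl
    rw [this]
    simp [ext]
  | succ k ih =>
    have : Fin.ofNat (n + 1) (k + 1) = Fin.ofNat (n + 1) k + 1 := by
      apply Fin.ext
      simp [Fin.val_add]
    rw [Function.iterate_succ_apply', ext_rot, ih, ih, this,
      add_comm (1 : Fin (n + 1)), add_assoc, add_comm (1 : Fin (n + 1))]
    ring

lemma rot_iterate {R : Type*} [CommRing R] {n : ℕ} : (rot : (Fin n → R) → _)^[n + 1] = id := by
  funext y
  apply ext_injective
  funext j
  rw [ext_rot_iterate]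
  have : Fin.ofNat (n + 1) (n + 1) = 0 := by
    apply Fin.ext
    simp
  rw [this]
  simp [ext]

lemma phi_rot {R : Type*} [CommRing R] {n : ℕ} (y : Fin n → R) :
    vand (ext (rot y)) * vand (cyc (ext (rot y))) = vand (ext y) * vand (cyc (ext y)) := by
  have h1 : vand (ext (rot y)) = vand (fun i => ext y (Equiv.addRight (1 : Fin (n + 1)) i)) := by
    rw [← vand_sub (fun i => ext y (Equiv.addRight (1 : Fin (n + 1)) i)) (ext y 1)]
    congr 1
    funext j
    rw [ext_rot]
    rfl
  have h2 : vand (cyc (ext (rot y)))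
      = vand (fun i => cyc (ext y) (Equiv.addRight (1 : Fin (n + 1)) i)) := by
    rw [← vand_sub (fun i => cyc (ext y) (Equiv.addRight (1 : Fin (n + 1)) i)) (2 * ext y 1)]
    congr 1
    funext j
    simp only [cyc, ext_rot, Equiv.coe_addRight]
    ring
  rw [h1, h2, vand_comp, vand_comp]
  have h3 : ((Equiv.Perm.sign (Equiv.addRight (1 : Fin (n + 1))) : ℤ) : R) *
      ((Equiv.Perm.sign (Equiv.addRight (1 : Fin (n + 1))) : ℤ) : R) = 1 := by
    rw [← Int.cast_mul, ← Units.val_mul, Int.units_mul_self]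
    simp
  linear_combination (vand (ext y) * vand (cyc (ext y))) * h3

/-- The sequences with `x₀ = 0` fixed by the rotation are the linear ones. -/
lemma rot_eq_iff {n : ℕ} [Fact (n + 1).Prime] (y : Fin n → ZMod (n + 1)) :
    rot y = y ↔ ∃ b : ZMod (n + 1), (fun i : Fin n => b * ((i : ℕ) + 1 : ZMod (n + 1))) = y := by
  have hn : 0 < n := by
    have := (Fact.out : (n + 1).Prime).two_le
    omega
  obtain ⟨m, rfl⟩ : ∃ m, n = m + 1 := ⟨n - 1, by omega⟩
  constructor
  · intro h
    have h1 : ∀ j, ext y (j + 1) = ext y j + ext y 1 := by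
      intro j
      have := ext_rot y j
      rw [h] at this
      rw [this]; ring
    refine ⟨ext y 1, ?_⟩
    have h2 : ∀ k : ℕ, ext y (Fin.ofNat _ k) = ext y 1 * k := by
      intro k
      induction k with
      | zero => simp [ext]
      | succ k ih =>
        have : Fin.ofNat (m + 1 + 1) (k + 1) = Fin.ofNat _ k + 1 := by
          apply Fin.ext
          simp [Fin.val_add]
        rw [this, h1, ih]
        push_cast
        ring
    funext i
    have h3 := h2 (i + 1)
    have : Fin.ofNat (m + 1 + 1) ((i : ℕ) + 1) = i.succ := by
      apply Fin.ext
      rw [Fin.val_succ]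
      exact Nat.mod_eq_of_lt (by omega)
    rw [this] at h3
    have h4 : ext y i.succ = y i := rfl
    rw [← h4, h3]
    push_cast
    rfl
  · rintro ⟨b, rfl⟩
    have h1 : ∀ j : Fin (m + 1 + 1),
        ext (fun i : Fin (m + 1) => b * ((i : ℕ) + 1 : ZMod (m + 1 + 1))) j = b * (j : ℕ) := by
      intro j
      refine Fin.cases ?_ (fun i => ?_) j
      · simp [ext]
      · simp [ext]
    apply ext_injective
    funext j
    rw [ext_rot, h1, h1, h1]
    have : (((j + 1 : Fin (m + 1 + 1)) : ℕ) : ZMod (m + 1 + 1)) = (j : ℕ) + 1 := by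
      rw [Fin.val_add, ZMod.natCast_mod]
      simp
    rw [this]
    simp
    ring

lemma cyc_mul {R : Type*} [CommRing R] {n : ℕ} (b : R) (x : Fin (n + 1) → R) :
    cyc (fun i => b * x i) = fun i => b * cyc x i := by
  funext i
  simp only [cyc]
  ring

/-- Summed over all `x` with `x₀ = 0`, the rotation-invariant product `V(x) V(s)` does not vanish:
modulo `p` only the `p - 1` sequences `xᵢ = b i` with `b ≠ 0` count, all with the same value. -/
lemma sum_phi_ne_zero {n : ℕ} [Fact (n + 1).Prime] (hodd : n + 1 ≠ 2) :
    ∑ y : Fin n → ZMod (n + 1), vand (ext y) * vand (cyc (ext y)) ≠ 0 := by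
  have hp := (Fact.out : (n + 1).Prime)
  have hn : 0 < n := by have := hp.two_le; omega
  rw [sum_eq_sum_fixed rot rot_iterate _ phi_rot]
  let L : ZMod (n + 1) → Fin n → ZMod (n + 1) :=
    fun b i => b * ((i : ℕ) + 1 : ZMod (n + 1))
  have hL : Function.Injective L := by
    intro b c h
    have := congrFun h ⟨0, hn⟩
    simpa [L] using this
  have hfix : (univ.filter fun y : Fin n → ZMod (n + 1) => rot y = y) = univ.image L := by
    ext y
    simp only [mem_filter, mem_univ, true_and, mem_image]
    exact rot_eq_iff y
  rw [hfix, Finset.sum_image (fun _ _ _ _ h => hL h)]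
  have hext : ∀ b, ext (L b) = fun i : Fin (n + 1) => b * ((i : ℕ) : ZMod (n + 1)) := by
    intro b
    funext j
    refine Fin.cases ?_ (fun i => ?_) j
    · simp [ext]
    · simp [ext, L]
  set x1 : Fin (n + 1) → ZMod (n + 1) := fun i => ((i : ℕ) : ZMod (n + 1)) with hx1
  have hval : ∀ b : ZMod (n + 1), vand (ext (L b)) * vand (cyc (ext (L b)))
      = (if b = 0 then 0 else 1) * (vand x1 * vand (cyc x1)) := by
    intro b
    -- The exponent is `2 (0 + 1 + ⋯ + n) = (n + 1) n`, and `bⁿ = 1` for `b ≠ 0`.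
    have hpow : (∏ j : Fin (n + 1), b ^ (j : ℕ)) * (∏ j : Fin (n + 1), b ^ (j : ℕ))
        = (if b = 0 then 0 else 1) := by
      rw [Fin.prod_univ_eq_prod_range (fun j => b ^ j) (n + 1), Finset.prod_pow_eq_pow_sum,
        ← pow_add, ← mul_two, Finset.sum_range_id_mul_two, Nat.add_sub_cancel]
      split_ifs with hb
      · rw [hb, zero_pow]
        positivity
      · have := ZMod.pow_card_sub_one_eq_one hb
        rw [Nat.add_sub_cancel] at this
        rw [mul_comm, pow_mul, this, one_pow]
    rw [hext, cyc_mul, vand_mul, vand_mul, ← hpow]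
    ring
  rw [Finset.sum_congr rfl (fun b _ => hval b), ← Finset.sum_mul]
  have hinj : Function.Injective x1 := by
    intro i j h
    simp only [hx1] at h
    rw [ZMod.natCast_eq_natCast_iff'] at h
    rw [Nat.mod_eq_of_lt i.2, Nat.mod_eq_of_lt j.2] at h
    exact Fin.ext h
  have h2 : (2 : ZMod (n + 1)) ≠ 0 := by
    intro h
    have : ((2 : ℕ) : ZMod (n + 1)) = 0 := by exact_mod_cast h
    rw [ZMod.natCast_eq_zero_iff] at this
    exact hodd ((Nat.prime_dvd_prime_iff_eq hp Nat.prime_two).1 this)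
  have hcyc : ∀ i, cyc x1 i = 2 * x1 i + 1 := by
    intro i
    simp only [cyc, hx1]
    rw [Fin.val_add, ZMod.natCast_mod]
    have : ((1 : Fin (n + 1)) : ℕ) = 1 := by
      obtain ⟨m, rfl⟩ : ∃ m, n = m + 1 := ⟨n - 1, by omega⟩
      simp
    rw [this]
    push_cast
    ring
  have hinj2 : Function.Injective (cyc x1) := by
    intro i j h
    rw [hcyc, hcyc] at h
    exact hinj (mul_left_cancel₀ h2 (add_right_cancel h))
  have hcount : ∑ b : ZMod (n + 1), (if b = 0 then (0 : ZMod (n + 1)) else 1) = -1 := by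
    have : ∀ b : ZMod (n + 1), (if b = 0 then (0 : ZMod (n + 1)) else 1)
        = 1 - (if b = 0 then 1 else 0) := by
      intro b; split_ifs <;> simp
    rw [Finset.sum_congr rfl (fun b _ => this b), Finset.sum_sub_distrib]
    rw [Finset.sum_ite_eq']
    simp only [sum_const, card_univ, ZMod.card, nsmul_eq_mul, ZMod.natCast_self, mem_univ, if_true]
    simp
  rw [hcount]
  exact mul_ne_zero (by simp) (mul_ne_zero (Matrix.det_vandermonde_ne_zero_iff.2 hinj)
    (Matrix.det_vandermonde_ne_zero_iff.2 hinj2))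

/-- If `y` and its path vertex sums are injective modulo an odd prime `p`, the only residue that
`y` misses is `0`: the `p` vertex sums are all residues and add up to `0`, but also to `2 ∑ y`. -/
lemma prod_eq {n : ℕ} [Fact (n + 1).Prime] (hodd : n + 1 ≠ 2) (y : Fin n → ZMod (n + 1))
    (hy : Function.Injective y) (hs : Function.Injective (cyc (ext y))) :
    ∏ i, y i = ∏ a ∈ univ.erase (0 : ZMod (n + 1)), a := by
  have hp := (Fact.out : (n + 1).Prime)
  have h2 : (2 : ZMod (n + 1)) ≠ 0 := by
    intro h
    have : ((2 : ℕ) : ZMod (n + 1)) = 0 := by exact_mod_cast h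
    rw [ZMod.natCast_eq_zero_iff] at this
    exact hodd ((Nat.prime_dvd_prime_iff_eq hp Nat.prime_two).1 this)
  have hall : ∑ a : ZMod (n + 1), a = 0 := by
    have := FiniteField.sum_pow_lt_card_sub_one (ZMod (n + 1)) 1
      (by rw [ZMod.card]; have := hp.two_le; omega)
    simpa using this
  have hbij : Function.Bijective (cyc (ext y)) :=
    (Fintype.bijective_iff_injective_and_card _).2 ⟨hs, by simp [ZMod.card]⟩
  have hsum1 : ∑ i, cyc (ext y) i = 0 := by
    rw [hbij.sum_comp (fun a => a), hall]
  have hsum2 : ∑ i, cyc (ext y) i = 2 * ∑ i, y i := by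
    have e1 : ∑ i, ext y i = ∑ i, y i := by
      rw [Fin.sum_univ_succ]; simp [ext]
    have e2 : ∑ i, ext y (i + 1) = ∑ i, ext y i :=
      Equiv.sum_comp (Equiv.addRight (1 : Fin (n + 1))) (ext y)
    simp only [cyc]
    rw [Finset.sum_add_distrib, e2, e1]
    ring
  have hy0 : ∑ i, y i = 0 := by
    have := hsum2.symm.trans hsum1
    exact (mul_eq_zero.1 this).resolve_left h2
  have himg : (univ.image y).card = n := by
    rw [Finset.card_image_of_injective _ hy]; simp
  have hcompl : ((univ.image y)ᶜ).card = 1 := by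
    rw [Finset.card_compl, himg, ZMod.card]; omega
  obtain ⟨c, hc⟩ := Finset.card_eq_one.1 hcompl
  have hc0 : c = 0 := by
    have := Finset.sum_add_sum_compl (univ.image y) (fun a : ZMod (n + 1) => a)
    rw [hc, Finset.sum_image (fun _ _ _ _ h => hy h), hy0, hall] at this
    simpa using this
  have : univ.erase (0 : ZMod (n + 1)) = univ.image y := by
    rw [← compl_compl (univ.image y), hc, hc0]
    ext a
    simp
  rw [this, Finset.prod_image (fun _ _ _ _ h => hy h)]

/-- For every vertex weighting `w` of the path on `p` vertices, `p` an odd prime, its edges can be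
labelled by distinct residues such that the weighted vertex sums are distinct modulo `p`. -/
lemma exists_path_labeling {n : ℕ} (hp : (n + 1).Prime) (hodd : n + 1 ≠ 2)
    (w : Fin (n + 1) → ZMod (n + 1)) :
    ∃ y : Fin n → ZMod (n + 1), Function.Injective y ∧
      Function.Injective (fun i => cyc (ext y) i + w i) := by
  have : Fact (n + 1).Prime := ⟨hp⟩
  have hn : 0 < n := by have := hp.two_le; omega
  have hne : ∑ y : Fin n → ZMod (n + 1), vand y * vand (fun i => cyc (ext y) i + w i) ≠ 0 := by
    rw [sum_indep hn]
    have key : ∀ y : Fin n → ZMod (n + 1), vand (ext y) * vand (cyc (ext y))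
        = (∏ a ∈ univ.erase (0 : ZMod (n + 1)), a) * (vand y * vand (cyc (ext y))) := by
      intro y
      rw [vand_ext]
      by_cases h1 : Function.Injective y
      · by_cases h2 : Function.Injective (cyc (ext y))
        · rw [prod_eq hodd y h1 h2]; ring
        · have : vand (cyc (ext y)) = 0 := by
            by_contra h
            exact h2 (Matrix.det_vandermonde_ne_zero_iff.1 h)
          rw [this]; ring
      · have : vand y = 0 := by
          by_contra h
          exact h1 (Matrix.det_vandermonde_ne_zero_iff.1 h)
        rw [this]; ring
    have h := sum_phi_ne_zero (n := n) hodd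
    rw [Finset.sum_congr rfl (fun y _ => key y), ← Finset.mul_sum] at h
    exact right_ne_zero_of_mul h
  obtain ⟨y, -, hy⟩ := Finset.exists_ne_zero_of_sum_ne_zero hne
  exact ⟨y, Matrix.det_vandermonde_ne_zero_iff.1 (left_ne_zero_of_mul hy),
    Matrix.det_vandermonde_ne_zero_iff.1 (right_ne_zero_of_mul hy)⟩

/-! ### From path labellings modulo a prime to antimagic labellings -/

lemma sum_ite_succ {R : Type*} [CommRing R] {n : ℕ} (y : Fin n → R) (i : Fin (n + 1)) :
    ∑ j : Fin n, (if i = j.succ then y j else 0) = ext y i := by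
  refine Fin.cases ?_ (fun k => ?_) i
  · refine (Finset.sum_eq_zero fun j _ => ?_).trans (by simp [ext])
    rw [if_neg (Fin.succ_ne_zero j).symm]
  · simp [ext]

lemma sum_ite_castSucc {R : Type*} [CommRing R] {n : ℕ} (y : Fin n → R) (i : Fin (n + 1)) :
    ∑ j : Fin n, (if i = j.castSucc then y j else 0) = ext y (i + 1) := by
  refine Fin.lastCases ?_ (fun k => ?_) i
  · refine (Finset.sum_eq_zero fun j _ => ?_).trans (by simp [ext])
    rw [if_neg (Fin.castSucc_lt_last j).ne']
  · rw [Fin.coeSucc_eq_succ]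
    simp [ext]

/-- A graph with a path on `p` vertices, `p` an odd prime, such that every vertex off the path is a
leaf attached to the path, is `1`-antimagic: with `L` edges off the path, these get the labels
`1, …, L`, and the path edges get labels in `L + 1, …, L + p` with prescribed residues modulo `p`. -/
lemma isAntimagic_of_path {V : Type*} [Fintype V] (G : SimpleGraph V) {n : ℕ}
    (hp : (n + 1).Prime) (hodd : n + 1 ≠ 2) (φ : Fin (n + 1) → V) (hφ : Function.Injective φ)
    (hadj : ∀ i : Fin n, G.Adj (φ i.castSucc) (φ i.succ))
    (hoff : ∀ u, u ∉ Set.range φ → ∃ v ∈ Set.range φ, ∀ w, G.Adj u w ↔ w = v) :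
    G.IsAntimagic 1 := by
  have hn : 0 < n := by have := hp.two_le; omega
  let E : Fin n → Sym2 V := fun i => s(φ i.castSucc, φ i.succ)
  have hE : Function.Injective E := by
    intro i j h
    simp only [E, Sym2.eq_iff, hφ.eq_iff, Fin.ext_iff, Fin.val_castSucc, Fin.val_succ] at h
    apply Fin.ext
    omega
  have hEmem : ∀ i, E i ∈ G.edgeFinset := fun i => by
    rw [SimpleGraph.mem_edgeFinset]; exact hadj i
  let R : Finset (Sym2 V) := G.edgeFinset \ univ.image E
  have hmemR : ∀ e, e ∈ R ↔ e ∈ G.edgeFinset ∧ ∀ i, E i ≠ e := by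
    intro e
    simp [R]
  set L := R.card with hL
  have hcard : G.edgeFinset.card = L + n := by
    have h1 : (univ.image E).card = n := by
      rw [Finset.card_image_of_injective _ hE]; simp
    have h2 : univ.image E ⊆ G.edgeFinset := by
      intro e he
      obtain ⟨i, -, rfl⟩ := Finset.mem_image.1 he
      exact hEmem i
    have h3 := Finset.card_sdiff_add_card_eq_card h2
    rw [h1] at h3
    exact h3.symm
  let g : R ≃ Fin L := R.equivFin
  let g' : Sym2 V → ℕ := fun e => if h : e ∈ R then (g ⟨e, h⟩ : ℕ) + 1 else 0
  have hg'1 : ∀ e ∈ R, 1 ≤ g' e ∧ g' e ≤ L := by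
    intro e he
    have := (g ⟨e, he⟩).2
    simp only [g', dif_pos he]
    omega
  have hg'2 : ∀ e ∈ R, ∀ e' ∈ R, g' e = g' e' → e = e' := by
    intro e he e' he' h
    simp only [g', dif_pos he, dif_pos he'] at h
    have := g.injective (Fin.ext (Nat.succ_injective h))
    exact congrArg Subtype.val this
  let w : Fin (n + 1) → ZMod (n + 1) :=
    fun i => ∑ e ∈ G.incidenceFinset (φ i) with e ∈ R, (g' e : ZMod (n + 1))
  obtain ⟨y, hy, hs⟩ := exists_path_labeling hp hodd w
  let lab : ZMod (n + 1) → ℕ := fun a => L + 1 + (a - ((L + 1 : ℕ) : ZMod (n + 1))).val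
  have hlab_cast : ∀ a, (lab a : ZMod (n + 1)) = a := by
    intro a
    simp only [lab]
    rw [Nat.cast_add, ZMod.natCast_zmod_val]
    ring
  have hlab_bd : ∀ a, L + 1 ≤ lab a ∧ lab a ≤ L + n + 1 := by
    intro a
    have := ZMod.val_lt (a - ((L + 1 : ℕ) : ZMod (n + 1)))
    simp only [lab]
    omega
  let f : Sym2 V → ℕ := fun e => if h : ∃ i, E i = e then lab (y h.choose) else g' e
  have hfE : ∀ i, f (E i) = lab (y i) := by
    intro i
    have h : ∃ j, E j = E i := ⟨i, rfl⟩
    simp only [f, dif_pos h]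
    rw [hE h.choose_spec]
  have hfR : ∀ e ∈ R, f e = g' e := by
    intro e he
    have h : ¬ ∃ i, E i = e := by
      rintro ⟨i, hi⟩
      exact ((hmemR e).1 he).2 i hi
    simp only [f, dif_neg h]
  have hcases : ∀ e ∈ G.edgeFinset, e ∈ R ∨ ∃ i, E i = e := by
    intro e he
    by_cases h : ∃ i, E i = e
    · exact Or.inr h
    · exact Or.inl ((hmemR e).2 ⟨he, fun i hi => h ⟨i, hi⟩⟩)
  have hinj : Set.InjOn f ↑G.edgeFinset := by
    intro e he e' he' h
    rcases hcases e he with h1 | ⟨i, rfl⟩ <;> rcases hcases e' he' with h2 | ⟨j, rfl⟩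
    · rw [hfR e h1, hfR e' h2] at h
      exact hg'2 e h1 e' h2 h
    · rw [hfR e h1, hfE] at h
      have := hg'1 e h1
      have := hlab_bd (y j)
      omega
    · rw [hfR e' h2, hfE] at h
      have := hg'1 e' h2
      have := hlab_bd (y i)
      omega
    · rw [hfE, hfE] at h
      have h3 : y i = y j := by rw [← hlab_cast (y i), h, hlab_cast]
      rw [hy h3]
  have hmemE : ∀ i j, φ i ∈ E j ↔ i = j.succ ∨ i = j.castSucc := by
    intro i j
    simp only [E, Sym2.mem_iff, hφ.eq_iff]
    exact or_comm
  have hsum : ∀ i, (G.vertexSum f (φ i) : ZMod (n + 1)) = cyc (ext y) i + w i := by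
    intro i
    unfold SimpleGraph.vertexSum
    rw [Nat.cast_sum, ← Finset.sum_filter_add_sum_filter_not _ (fun e => e ∈ R)]
    refine (add_comm _ _).trans ?_
    congr 1
    · have himg : (G.incidenceFinset (φ i)).filter (fun e => e ∉ R)
          = (univ.filter fun j => φ i ∈ E j).image E := by
        ext e
        simp only [Finset.mem_filter, Finset.mem_image, Finset.mem_univ, true_and,
          SimpleGraph.mem_incidenceFinset]
        constructor
        · rintro ⟨⟨he, hi⟩, hR⟩
          rcases hcases e (SimpleGraph.mem_edgeFinset.2 he) with h | ⟨j, rfl⟩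
          · exact absurd h hR
          · exact ⟨j, hi, rfl⟩
        · rintro ⟨j, hi, rfl⟩
          exact ⟨⟨SimpleGraph.mem_edgeFinset.1 (hEmem j), hi⟩, fun h => ((hmemR _).1 h).2 j rfl⟩
      rw [himg, Finset.sum_image (fun _ _ _ _ h => hE h), Finset.sum_filter]
      simp only [cyc]
      rw [← sum_ite_succ, ← sum_ite_castSucc, ← Finset.sum_add_distrib]
      refine Finset.sum_congr rfl fun j _ => ?_
      rw [hfE, hlab_cast]
      by_cases h1 : i = j.succ
      · have h2 : i ≠ j.castSucc := by
          rw [h1]; exact (Fin.castSucc_lt_succ).ne'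
        rw [if_pos ((hmemE i j).2 (Or.inl h1)), if_pos h1, if_neg h2, add_zero]
      · by_cases h2 : i = j.castSucc
        · rw [if_pos ((hmemE i j).2 (Or.inr h2)), if_neg h1, if_pos h2, zero_add]
        · rw [if_neg (fun h => ((hmemE i j).1 h).elim h1 h2), if_neg h1, if_neg h2, add_zero]
    · refine Finset.sum_congr rfl fun e he => ?_
      rw [hfR e (Finset.mem_filter.1 he).2]
  have hbig : ∀ i, L + 1 ≤ G.vertexSum f (φ i) := by
    intro i
    have hj : ∃ j, φ i ∈ E j := by
      refine Fin.cases ?_ (fun k => ?_) i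
      · exact ⟨⟨0, hn⟩, (hmemE _ _).2 (Or.inr (Fin.ext rfl))⟩
      · exact ⟨k, (hmemE _ _).2 (Or.inl rfl)⟩
    obtain ⟨j, hj⟩ := hj
    have h1 : E j ∈ G.incidenceFinset (φ i) := by
      rw [SimpleGraph.mem_incidenceFinset]
      exact ⟨SimpleGraph.mem_edgeFinset.1 (hEmem j), hj⟩
    have h2 := Finset.single_le_sum (f := f) (fun _ _ => Nat.zero_le _) h1
    rw [hfE] at h2
    exact (hlab_bd (y j)).1.trans h2
  have hleaf : ∀ u, u ∉ Set.range φ → ∃ v ∈ Set.range φ, s(u, v) ∈ R ∧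
      G.vertexSum f u = f s(u, v) := by
    intro u hu
    obtain ⟨v, hv, hw⟩ := hoff u hu
    refine ⟨v, hv, (hmemR _).2 ⟨SimpleGraph.mem_edgeFinset.2 ((hw v).2 rfl), fun i hi => hu ?_⟩, ?_⟩
    · have : u ∈ E i := by rw [hi]; exact Sym2.mem_mk_left u v
      rcases Sym2.mem_iff.1 this with h | h
      · exact ⟨_, h.symm⟩
      · exact ⟨_, h.symm⟩
    · have : G.incidenceFinset u = {s(u, v)} := by
        ext e
        rw [SimpleGraph.mem_incidenceFinset, Finset.mem_singleton]
        constructor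
        · rintro ⟨he, hue⟩
          obtain ⟨x, rfl⟩ := Sym2.mem_iff_exists.1 hue
          rw [(hw x).1 he]
        · rintro rfl
          exact ⟨(hw v).2 rfl, Sym2.mem_mk_left u v⟩
      unfold SimpleGraph.vertexSum
      rw [this, Finset.sum_singleton]
  refine ⟨f, ?_, hinj, ?_⟩
  · intro e he
    rw [hcard, Finset.mem_Icc]
    rcases hcases e he with h | ⟨i, rfl⟩
    · rw [hfR e h]
      have := hg'1 e h
      omega
    · rw [hfE]
      have := hlab_bd (y i)
      omega
  · have hmix : ∀ u i, u ∉ Set.range φ → G.vertexSum f u ≠ G.vertexSum f (φ i) := by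
      intro u i hu h
      obtain ⟨v, -, hR, hs'⟩ := hleaf u hu
      rw [hs', hfR _ hR] at h
      have := hg'1 _ hR
      have := hbig i
      omega
    intro u v h
    by_cases hu : u ∈ Set.range φ <;> by_cases hv : v ∈ Set.range φ
    · obtain ⟨i, rfl⟩ := hu
      obtain ⟨j, rfl⟩ := hv
      have h1 := hsum i
      rw [h, hsum j] at h1
      rw [hs h1.symm]
    · obtain ⟨i, rfl⟩ := hu
      exact absurd h.symm (hmix v i hv)
    · obtain ⟨j, rfl⟩ := hv
      exact absurd h (hmix u j hu)
    · obtain ⟨a, ha, hR, hs1⟩ := hleaf u hu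
      obtain ⟨b, hb, hR', hs2⟩ := hleaf v hv
      rw [hs1, hs2] at h
      have h2 := hinj (Finset.mem_sdiff.1 hR).1 (Finset.mem_sdiff.1 hR').1 h
      rcases Sym2.eq_iff.1 h2 with ⟨h3, -⟩ | ⟨h3, -⟩
      · exact h3
      · exact absurd (h3 ▸ hb) hu

/-! ### Spine paths of caterpillars -/

/-- `φ` lists the vertices of an induced path of `G` that contains every vertex of degree at
least `2`. -/
def IsSpinePath {V : Type*} [Fintype V] (G : SimpleGraph V) {m : ℕ} (φ : Fin m → V) : Prop :=
  Function.Injective φ ∧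
    (∀ i j : Fin m, G.Adj (φ i) (φ j) ↔ (i : ℕ) + 1 = j ∨ (j : ℕ) + 1 = i) ∧
    ∀ v, 2 ≤ G.degree v → v ∈ Set.range φ

lemma IsSpinePath.rev {V : Type*} [Fintype V] {G : SimpleGraph V} {m : ℕ} {φ : Fin m → V}
    (h : IsSpinePath G φ) : IsSpinePath G (fun i => φ i.rev) := by
  refine ⟨h.1.comp Fin.rev_injective, fun i j => ?_, fun v hv => ?_⟩
  · rw [h.2.1, Fin.val_rev, Fin.val_rev]
    omega
  · obtain ⟨i, rfl⟩ := h.2.2 v hv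
    exact ⟨i.rev, by simp⟩

/-- A spine path starting at a vertex of degree at least `2` can be prolonged by a leaf. -/
lemma IsSpinePath.extend {V : Type*} [Fintype V] {G : SimpleGraph V} {m : ℕ}
    {φ : Fin (m + 1) → V} (h : IsSpinePath G φ) (h0 : 2 ≤ G.degree (φ 0)) :
    ∃ u, IsSpinePath G (Fin.cons u φ : Fin (m + 2) → V) := by
  obtain ⟨hinj, hadj, hsp⟩ := h
  obtain ⟨u, hu, hur⟩ : ∃ u, G.Adj (φ 0) u ∧ u ∉ Set.range φ := by
    by_contra! hcon
    have : G.degree (φ 0) ≤ 1 := by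
      rw [← SimpleGraph.card_neighborFinset_eq_degree, Finset.card_le_one]
      intro a ha b hb
      rw [SimpleGraph.mem_neighborFinset] at ha hb
      obtain ⟨i, rfl⟩ := hcon a ha
      obtain ⟨j, rfl⟩ := hcon b hb
      rw [hadj] at ha hb
      rw [Fin.val_zero] at ha hb
      congr 1
      apply Fin.ext
      omega
    omega
  have hdeg : ∀ v, G.Adj u v ↔ v = φ 0 := by
    intro v
    refine ⟨fun hv => ?_, fun hv => hv ▸ hu.symm⟩
    have : G.degree u ≤ 1 := by
      by_contra hd
      exact hur (hsp u (by omega))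
    rw [← SimpleGraph.card_neighborFinset_eq_degree, Finset.card_le_one] at this
    exact this v (by simpa using hv) (φ 0) (by simpa using hu.symm)
  have hdeg' : ∀ v, G.Adj v u ↔ v = φ 0 := fun v => by rw [G.adj_comm, hdeg]
  refine ⟨u, Fin.cons_injective_iff.2 ⟨hur, hinj⟩, fun i j => ?_, fun v hv => ?_⟩
  · refine Fin.cases ?_ (fun i => ?_) i <;> refine Fin.cases ?_ (fun j => ?_) j
    · simp
    · simp only [Fin.cons_zero, Fin.cons_succ, hdeg, hinj.eq_iff, Fin.ext_iff, Fin.val_zero,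
        Fin.val_succ]
      omega
    · simp only [Fin.cons_zero, Fin.cons_succ, hdeg', hinj.eq_iff, Fin.ext_iff, Fin.val_zero,
        Fin.val_succ]
      omega
    · simp only [Fin.cons_succ, hadj, Fin.val_succ]
      omega
  · obtain ⟨i, rfl⟩ := hsp v hv
    exact ⟨i.succ, by simp⟩

/-- A vertex of degree at most `1` is a leaf, and its neighbor is not: otherwise the two of them
would form a whole component. -/
lemma leaf_neighbor {V : Type*} [Fintype V] {G : SimpleGraph V} (hc : G.Connected)
    (h3 : 3 ≤ Fintype.card V) (u : V) (hu : ¬ 2 ≤ G.degree u) :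
    ∃ v, 2 ≤ G.degree v ∧ ∀ w, G.Adj u w ↔ w = v := by
  have : Nontrivial V := Fintype.one_lt_card_iff_nontrivial.1 (by omega)
  have huniq : ∀ u, ¬ 2 ≤ G.degree u → ∀ v w, G.Adj u v → G.Adj u w → w = v := by
    intro u hu v w hv hw
    have : G.degree u ≤ 1 := by omega
    rw [← SimpleGraph.card_neighborFinset_eq_degree, Finset.card_le_one] at this
    exact this w (by simpa using hw) v (by simpa using hv)
  have hpos := hc.preconnected.degree_pos_of_nontrivial u
  obtain ⟨v, hv⟩ := (G.degree_pos_iff_exists_adj u).1 hpos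
  refine ⟨v, ?_, fun w => ⟨huniq u hu v w hv, fun h => h ▸ hv⟩⟩
  by_contra hd
  have hall : ∀ w, w = u ∨ w = v := by
    intro w
    have := (SimpleGraph.reachable_iff_reflTransGen u w).1 (hc.preconnected u w)
    induction this with
    | refl => exact Or.inl rfl
    | tail _ hbc ih =>
      rcases ih with rfl | rfl
      · exact Or.inr (huniq _ hu _ _ hv hbc)
      · exact Or.inl (huniq _ hd _ _ hv.symm hbc)
  have : (univ : Finset V) ⊆ {u, v} := fun w _ => by simpa using hall w
  have h4 := (Finset.card_le_card this).trans Finset.card_le_two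
  rw [Finset.card_univ] at h4
  omega

lemma isAntimagic_of_spinePath {V : Type*} [Fintype V] {G : SimpleGraph V} (hc : G.Connected)
    (h3 : 3 ≤ Fintype.card V) {n : ℕ} (hp : (n + 1).Prime) (hodd : n + 1 ≠ 2)
    {φ : Fin (n + 1) → V} (h : IsSpinePath G φ) : G.IsAntimagic 1 := by
  refine isAntimagic_of_path G hp hodd φ h.1 (fun i => (h.2.1 _ _).2 (Or.inl ?_)) fun u hu => ?_
  · simp
  · obtain ⟨v, hv, hw⟩ := leaf_neighbor hc h3 u fun hd => hu (h.2.2 u hd)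
    exact ⟨v, h.2.2 v hv, hw⟩

end CaterpillarPrime

open CaterpillarPrime

/-- If `p` is a prime number, then every caterpillar whose spine has order `p`,
`p - 1` or `p - 2` is `1`-antimagic. -/
theorem caterpillar_isAntimagic_one_of_prime [Fintype V] (G : SimpleGraph V)
    (hC : G.IsCaterpillar) (p : ℕ) (hp : p.Prime)
    (hs : G.spineOrder = p ∨ G.spineOrder = p - 1 ∨ G.spineOrder = p - 2) :
    G.IsAntimagic 1 := by
  obtain ⟨hT, h3, ⟨e⟩⟩ := hC
  have hc := hT.connected
  have hpos : 0 < G.spineOrder := by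
    have : Nonempty G.spine := by
      obtain ⟨u⟩ := hc.nonempty
      by_cases hu : 2 ≤ G.degree u
      · exact ⟨⟨u, hu⟩⟩
      · obtain ⟨v, hv, -⟩ := leaf_neighbor hc h3 u hu
        exact ⟨⟨v, hv⟩⟩
    exact Nat.card_pos
  -- A spine of order at most `2` is also covered by the prime `3`, so `p` may be taken odd.
  obtain ⟨q, hq, hq2, hk⟩ : ∃ q, q.Prime ∧ q ≠ 2 ∧
      (G.spineOrder = q ∨ G.spineOrder + 1 = q ∨ G.spineOrder + 2 = q) := by
    by_cases h2 : p = 2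
    · exact ⟨3, Nat.prime_three, by norm_num, by omega⟩
    · have := hp.two_le
      exact ⟨p, hp, h2, by omega⟩
  generalize G.spineOrder = k at e hpos hk
  obtain ⟨m, rfl⟩ : ∃ m, k = m + 1 := ⟨k - 1, by omega⟩
  have hφ : IsSpinePath G (fun i : Fin (m + 1) => (e.symm i : V)) := by
    refine ⟨Subtype.val_injective.comp e.symm.injective, fun i j => ?_, fun v hv => ?_⟩
    · rw [← pathGraph_adj, ← e.symm.map_adj_iff]
      rfl
    · exact ⟨e ⟨v, hv⟩, by simp⟩
  rcases hk with rfl | rfl | rfl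
  · exact isAntimagic_of_spinePath hc h3 hq hq2 hφ
  · obtain ⟨u, hu⟩ := hφ.extend (e.symm 0).2
    exact isAntimagic_of_spinePath hc h3 hq hq2 hu
  · obtain ⟨u, hu⟩ := hφ.extend (e.symm 0).2
    -- The reversed path starts at the other end of the spine.
    obtain ⟨u', hu'⟩ := hu.rev.extend (by
      rw [Fin.rev_zero, ← Fin.succ_last, Fin.cons_succ]
      exact (e.symm (Fin.last m)).2)
    exact isAntimagic_of_spinePath hc h3 hq hq2 hu'
end

section
/- Let C be a caterpillar whose spine has order s, and let k ∈ {0, 1, 2}. If the path graph on s+k vertices is weighted-1-antimagic, then C is 1-antimagic. -/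
/-!
The spine, extended by a leaf at `k` of its ends, is an induced path `P` on `s + k` vertices
(`exists_isSpinePath`), and each remaining vertex of the caterpillar is a leaf attached to a vertex
of `P` (`exists_pendant_neighbor`). Let `N` be the number of these remaining leaves. Label their
edges `1, …, N` in any way, and give the edges of `P` larger labels, `N` plus the labels of a
weighted antimagic labeling. Both the shift by `N` and the sum of the pendant labels at a
vertex of `P` are known in advance, so they can be put into the weight function, which makes the
sums on `P` pairwise distinct. The remaining leaves have distinct sums at most `N`, and every vertex
of `P` lies on an edge of `P` and has sum above `N`; the only exception is a star with `P` reduced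
to its centre, whose sum is the sum of all labels. This is
`isAntimagic_one_of_pendant_extension`.
-/

open Finset SimpleGraph
open scoped Classical

variable {V : Type*}

/-- A graph `G` is weighted-`k`-antimagic if for every vertex weight function `w`,
there is an injection `f` from the edge set of `G` to `{1, ..., |E(G)| + k}` such
that the weighted vertex sums `w(v) + ∑_{e ∋ v} f(e)` are pairwise distinct. -/
def SimpleGraph.IsWeightedAntimagic {W : Type*} [Fintype W] (G : SimpleGraph W)
    (k : ℕ) : Prop :=
  ∀ w : W → ℕ, ∃ f : Sym2 W → ℕ,
    (∀ e ∈ G.edgeFinset, f e ∈ Finset.Icc 1 (G.edgeFinset.card + k)) ∧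
    Set.InjOn f ↑G.edgeFinset ∧
    Function.Injective (fun v => w v + G.vertexSum f v)

/-! ### Vertex sums over neighbours and labels of the pendant vertices -/

lemma vertexSum_eq_sum_neighborFinset [Fintype V] (G : SimpleGraph V) (f : Sym2 V → ℕ) (v : V) :
    G.vertexSum f v = ∑ u ∈ G.neighborFinset v, f s(v, u) := by
  unfold SimpleGraph.vertexSum
  symm
  refine Finset.sum_bij (fun u _ => s(v, u)) ?_ ?_ ?_ ?_
  · intro u hu
    simpa [SimpleGraph.mem_incidenceFinset, SimpleGraph.mk'_mem_incidenceSet_iff] using hu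
  · intro a _ b _ h
    exact Sym2.congr_right.mp h
  · intro e he
    induction e using Sym2.ind with
    | _ a b =>
      rw [SimpleGraph.mem_incidenceFinset, SimpleGraph.mk'_mem_incidenceSet_iff] at he
      obtain ⟨hab, rfl | rfl⟩ := he
      · exact ⟨b, by simpa using hab, rfl⟩
      · exact ⟨a, by simpa using hab.symm, Sym2.eq_swap⟩
  · intro _ _; rfl

/-- An enumeration of `S` by `1, …, |S|`, extended by `0` outside `S`. -/
lemma exists_labeling_of_finset (S : Finset V) :
    ∃ lab : V → ℕ, (∀ u ∈ S, 1 ≤ lab u ∧ lab u ≤ S.card) ∧ (∀ u ∉ S, lab u = 0) ∧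
      Set.InjOn lab S ∧ (S.Nonempty → ∃ u ∈ S, lab u = S.card) := by
  refine ⟨fun v => if h : v ∈ S then (S.equivFin ⟨v, h⟩ : ℕ) + 1 else 0, ?_, ?_, ?_, ?_⟩
  · intro u hu
    simp only [hu, dite_true]
    have := (S.equivFin ⟨u, hu⟩).2
    omega
  · intro u hu
    simp [hu]
  · intro a ha b hb h
    simp only [Finset.mem_coe] at ha hb
    simp only [ha, hb, dite_true, Nat.add_right_cancel_iff] at h
    simpa using S.equivFin.injective (Fin.ext h)
  · intro hS
    have hc : 0 < S.card := hS.card_pos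
    refine ⟨S.equivFin.symm ⟨S.card - 1, by omega⟩, Finset.coe_mem _, ?_⟩
    simp only [Finset.coe_mem, dite_true, Subtype.coe_eta, Equiv.apply_symm_apply]
    omega

/-! ### From a weighted antimagic core to the whole graph -/

/-- Let `G` arise from its induced subgraph `H` (embedded by `φ`) by attaching `N` pendant vertices.
Pendant edges get the labels `1, …, N`, and the edges of `H` get labels shifted up by `N`. A pendant
vertex then has sum at most `N`, a vertex of `H` has sum greater than `N`, and two vertices
of `H` are separated by weighted antimagicness, applied to the weight formed by the pendant
labels at a vertex plus `N` times its degree in `H`. The hypothesis `hiso` says that an isolated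
vertex of `H` is the centre of all pendant edges, of which there are at least two; its sum
exceeds `N` because it includes the label `N` and another one. -/
theorem isAntimagic_one_of_pendant_extension {W : Type*} [Fintype V] [Fintype W]
    (G : SimpleGraph V) (H : SimpleGraph W) (φ : W → V) (hφ : Function.Injective φ)
    (hadj : ∀ x y, G.Adj (φ x) (φ y) ↔ H.Adj x y)
    (hpend : ∀ u ∉ Set.range φ, ∃ x, ∀ v, G.Adj u v ↔ v = φ x)
    (hiso : ∀ x, (∃ y, H.Adj x y) ∨
      ((∀ u ∉ Set.range φ, G.Adj (φ x) u) ∧ 2 ≤ G.degree (φ x)))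
    (hH : H.IsWeightedAntimagic 1) : G.IsAntimagic 1 := by
  set S : Finset V := Finset.univ.filter (fun v => v ∉ Set.range φ) with hSdef
  have hS : ∀ v, v ∈ S ↔ v ∉ Set.range φ := fun v => by simp [hSdef]
  have hφS : ∀ x, φ x ∉ S := fun x => by simp [hS]
  obtain ⟨lab, hlab, hlab0, hinj, htop⟩ := exists_labeling_of_finset S
  set N := S.card with hN
  have hcase : ∀ v, v ∈ S ∨ ∃ x, v = φ x := by
    intro v
    by_cases h : v ∈ S
    · exact Or.inl h
    · rw [hS, not_not] at h
      obtain ⟨x, rfl⟩ := h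
      exact Or.inr ⟨x, rfl⟩
  obtain ⟨g, hg1, hg2, hg3⟩ := hH
    (fun x => N * H.degree x + ∑ u ∈ (G.neighborFinset (φ x)).filter (· ∈ S), lab u)
  set ψ : Sym2 W → Sym2 V := Sym2.map φ with hψ
  have hψi : Function.Injective ψ := Sym2.map.injective hφ
  -- On a pendant edge, `lab a + lab b` is the label of its pendant end, since `lab` vanishes
  -- on the range of `φ`.
  set f : Sym2 V → ℕ := Function.extend ψ (fun e => N + g e)
    (Sym2.lift ⟨fun a b => lab a + lab b, fun a b => add_comm _ _⟩) with hf
  have hfH : ∀ x y, f s(φ x, φ y) = N + g s(x, y) := by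
    intro x y
    have : s(φ x, φ y) = ψ s(x, y) := rfl
    rw [this, hf, hψi.extend_apply]
  have hfP : ∀ u ∈ S, ∀ x, f s(φ x, u) = lab u := by
    intro u hu x
    rw [hf, Function.extend_apply']
    · simp [hlab0 _ (hφS x)]
    · rintro ⟨e, he⟩
      have hmem : u ∈ ψ e := by rw [he]; simp
      obtain ⟨y, -, hy⟩ := Sym2.mem_map.mp hmem
      exact hφS y (hy ▸ hu)
  have hnb : ∀ x, (G.neighborFinset (φ x)).filter (· ∉ S) = (H.neighborFinset x).image φ := by
    intro x
    ext v
    simp only [Finset.mem_filter, SimpleGraph.mem_neighborFinset, Finset.mem_image]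
    constructor
    · rintro ⟨h1, h2⟩
      obtain h | ⟨y, rfl⟩ := hcase v
      · exact absurd h h2
      · exact ⟨y, (hadj _ _).1 h1, rfl⟩
    · rintro ⟨y, hy, rfl⟩
      exact ⟨(hadj _ _).2 hy, hφS y⟩
  have hsumφ : ∀ x, G.vertexSum f (φ x) =
      (N * H.degree x + ∑ u ∈ (G.neighborFinset (φ x)).filter (· ∈ S), lab u)
        + H.vertexSum g x := by
    intro x
    rw [vertexSum_eq_sum_neighborFinset, vertexSum_eq_sum_neighborFinset,
      ← Finset.sum_filter_add_sum_filter_not _ (· ∈ S), hnb,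
      Finset.sum_image (fun a _ b _ h => hφ h)]
    simp only [hfH, Finset.sum_add_distrib, Finset.sum_const, smul_eq_mul,
      SimpleGraph.card_neighborFinset_eq_degree]
    have : ∑ u ∈ (G.neighborFinset (φ x)).filter (· ∈ S), f s(φ x, u) =
        ∑ u ∈ (G.neighborFinset (φ x)).filter (· ∈ S), lab u :=
      Finset.sum_congr rfl (fun u hu => hfP u (Finset.mem_filter.1 hu).2 x)
    rw [this]
    ring
  have hsumS : ∀ u ∈ S, G.vertexSum f u = lab u := by
    intro u hu
    obtain ⟨x, hx⟩ := hpend u ((hS u).1 hu)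
    have : G.neighborFinset u = {φ x} := by
      ext v; simp [hx]
    rw [vertexSum_eq_sum_neighborFinset, this, Finset.sum_singleton, Sym2.eq_swap, hfP u hu]
  have hgpos : ∀ x y, H.Adj x y → 1 ≤ g s(x, y) := fun x y h =>
    (Finset.mem_Icc.1 (hg1 s(x, y) (by simpa using h))).1
  have hbig : ∀ x, N < G.vertexSum f (φ x) := by
    intro x
    rw [vertexSum_eq_sum_neighborFinset]
    by_cases hy : ∃ y, H.Adj x y
    · obtain ⟨y, hy⟩ := hy
      have hm : φ y ∈ G.neighborFinset (φ x) := by simpa using (hadj _ _).2 hy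
      have h1 := Finset.single_le_sum (f := fun u => f s(φ x, u))
        (fun _ _ => Nat.zero_le _) hm
      have h2 := hgpos x y hy
      simp only [hfH] at h1
      omega
    · obtain h | ⟨hall, hdeg⟩ := hiso x
      · exact absurd h hy
      have hsub : G.neighborFinset (φ x) ⊆ S := by
        intro v hv
        obtain h | ⟨y, rfl⟩ := hcase v
        · exact h
        · exact absurd ⟨y, (hadj _ _).1 (by simpa using hv)⟩ hy
      rw [← SimpleGraph.card_neighborFinset_eq_degree] at hdeg
      have hne : S.Nonempty := (Finset.card_pos.1 (by omega)).mono hsub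
      obtain ⟨t, ht, htN⟩ := htop hne
      have htm : t ∈ G.neighborFinset (φ x) := by simpa using hall t ((hS t).1 ht)
      obtain ⟨u, hu, hut⟩ := Finset.exists_mem_ne (lt_of_lt_of_le one_lt_two hdeg) t
      have h1 : ∑ v ∈ ({t, u} : Finset V), f s(φ x, v) ≤
          ∑ v ∈ G.neighborFinset (φ x), f s(φ x, v) :=
        Finset.sum_le_sum_of_subset (by
          intro v hv
          rcases Finset.mem_insert.1 hv with rfl | hv
          · exact htm
          · rw [Finset.mem_singleton.1 hv]; exact hu)
      rw [Finset.sum_pair hut.symm, hfP t ht, hfP u (hsub hu), htN] at h1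
      have := (hlab u (hsub hu)).1
      omega
  have hedge : ∀ e ∈ G.edgeFinset, (∃ x y, H.Adj x y ∧ e = s(φ x, φ y)) ∨
      ∃ u ∈ S, ∃ x, G.Adj u (φ x) ∧ e = s(φ x, u) := by
    intro e he
    induction e using Sym2.ind with
    | _ a b =>
      have hab : G.Adj a b := by simpa using he
      obtain ha | ⟨x, rfl⟩ := hcase a
      · obtain ⟨x, hx⟩ := hpend a ((hS a).1 ha)
        obtain rfl := (hx b).1 hab
        exact Or.inr ⟨a, ha, x, hab, Sym2.eq_swap⟩
      · obtain hb | ⟨y, rfl⟩ := hcase b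
        · exact Or.inr ⟨b, hb, x, hab.symm, rfl⟩
        · exact Or.inl ⟨x, y, (hadj _ _).1 hab, rfl⟩
  -- The edges of `H` and one edge per pendant vertex are distinct edges of `G`, so the labels
  -- up to `N + |E(H)| + 1` are available.
  have hcard : H.edgeFinset.card + N ≤ G.edgeFinset.card := by
    have hex : ∀ u, ∃ v, u ∈ S → (∃ x, v = φ x) ∧ G.Adj v u := by
      intro u
      by_cases hu : u ∈ S
      · obtain ⟨x, hx⟩ := hpend u ((hS u).1 hu)
        exact ⟨φ x, fun _ => ⟨⟨x, rfl⟩, ((hx _).2 rfl).symm⟩⟩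
      · exact ⟨u, fun h => absurd h hu⟩
    choose nb hnbr using hex
    have hfnb : ∀ u ∈ S, f s(nb u, u) = lab u := by
      intro u hu
      obtain ⟨⟨x, hx⟩, -⟩ := hnbr u hu
      rw [hx, hfP u hu]
    have hdisj : Disjoint (H.edgeFinset.image ψ) (S.image fun u => s(nb u, u)) := by
      rw [Finset.disjoint_left]
      intro e he he'
      obtain ⟨e', -, rfl⟩ := Finset.mem_image.1 he
      obtain ⟨u, hu, heq⟩ := Finset.mem_image.1 he'
      have hmem : u ∈ ψ e' := by rw [← heq]; simp
      obtain ⟨y, -, hy⟩ := Sym2.mem_map.mp hmem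
      exact hφS y (hy ▸ hu)
    have hinjS : Set.InjOn (fun u => s(nb u, u)) (S : Set V) := by
      intro a ha b hb h
      have h' := congrArg f h
      simp only [hfnb a ha, hfnb b hb] at h'
      exact hinj ha hb h'
    rw [← Finset.card_image_of_injective _ hψi, hN, ← Finset.card_image_of_injOn hinjS,
      ← Finset.card_union_of_disjoint hdisj]
    apply Finset.card_le_card
    intro e he
    rcases Finset.mem_union.1 he with he | he
    · obtain ⟨e', he', rfl⟩ := Finset.mem_image.1 he
      induction e' using Sym2.ind with
      | _ x y =>
        have : H.Adj x y := by simpa using he'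
        simpa [hψ] using (hadj x y).2 this
    · obtain ⟨u, hu, rfl⟩ := Finset.mem_image.1 he
      simpa using (hnbr u hu).2
  refine ⟨f, ?_, ?_, ?_⟩
  · intro e he
    rw [Finset.mem_Icc]
    obtain ⟨x, y, hxy, rfl⟩ | ⟨u, hu, x, -, rfl⟩ := hedge e he
    · have := Finset.mem_Icc.1 (hg1 s(x, y) (by simpa using hxy))
      rw [hfH]
      omega
    · have := hlab u hu
      rw [hfP u hu]
      omega
  · intro e he e' he' h
    obtain ⟨x, y, hxy, rfl⟩ | ⟨u, hu, x, hux, rfl⟩ := hedge e (by simpa using he)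
    · obtain ⟨x', y', hxy', rfl⟩ | ⟨u', hu', x', hux', rfl⟩ := hedge e' (by simpa using he')
      · rw [hfH, hfH] at h
        have := hg2 (x₁ := s(x, y)) (x₂ := s(x', y')) (by simpa using hxy) (by simpa using hxy')
          (by omega)
        exact congrArg ψ this
      · rw [hfH, hfP u' hu'] at h
        have := hgpos x y hxy
        have := hlab u' hu'
        omega
    · obtain ⟨x', y', hxy', rfl⟩ | ⟨u', hu', x', hux', rfl⟩ := hedge e' (by simpa using he')
      · rw [hfH, hfP u hu] at h
        have := hgpos x' y' hxy'
        have := hlab u hu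
        omega
      · rw [hfP u hu, hfP u' hu'] at h
        obtain rfl := hinj hu hu' h
        obtain ⟨z, hz⟩ := hpend u ((hS u).1 hu)
        rw [(hz _).1 hux, (hz _).1 hux']
  · intro a b h
    obtain ha | ⟨x, rfl⟩ := hcase a
    · obtain hb | ⟨y, rfl⟩ := hcase b
      · rw [hsumS a ha, hsumS b hb] at h
        exact hinj ha hb h
      · have := hbig y
        rw [← h, hsumS a ha] at this
        have := hlab a ha
        omega
    · obtain hb | ⟨y, rfl⟩ := hcase b
      · have := hbig x
        rw [h, hsumS b hb] at this
        have := hlab b hb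
        omega
      · rw [hsumφ, hsumφ] at h
        exact congrArg φ (hg3 h)

/-! ### Spine paths in a caterpillar -/

/-- An induced path `φ 0, …, φ (p - 1)` of `G` that contains the whole spine. -/
def IsSpinePath [Fintype V] (G : SimpleGraph V) {p : ℕ} (φ : Fin p → V) : Prop :=
  Function.Injective φ ∧ (∀ i j, G.Adj (φ i) (φ j) ↔ (pathGraph p).Adj i j) ∧
    G.spine ⊆ Set.range φ

lemma IsSpinePath.rev [Fintype V] {G : SimpleGraph V} {p : ℕ} {φ : Fin p → V}
    (h : IsSpinePath G φ) : IsSpinePath G (φ ∘ Fin.rev) := by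
  obtain ⟨h1, h2, h3⟩ := h
  refine ⟨h1.comp Fin.rev_injective, ?_, ?_⟩
  · intro i j
    simp only [Function.comp, h2, pathGraph_adj, Fin.val_rev]
    omega
  · rwa [Fin.rev_surjective.range_comp]

/-- If a spine path ends in a spine vertex, that vertex has at most one neighbour on the path but
degree at least 2, so it has a neighbour off the path. That neighbour is a leaf, and appending it
gives a longer spine path. -/
lemma IsSpinePath.extend [Fintype V] {G : SimpleGraph V} {p : ℕ} {φ : Fin (p + 1) → V}
    (h : IsSpinePath G φ) (hlast : φ (Fin.last p) ∈ G.spine) :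
    ∃ u, IsSpinePath G (Fin.snoc (α := fun _ => V) φ u) := by
  obtain ⟨h1, h2, h3⟩ := h
  have hdeg : 2 ≤ G.degree (φ (Fin.last p)) := hlast
  obtain ⟨u, hu, hur⟩ : ∃ u, G.Adj (φ (Fin.last p)) u ∧ u ∉ Set.range φ := by
    by_contra! hcon
    rw [← SimpleGraph.card_neighborFinset_eq_degree] at hdeg
    obtain ⟨a, ha, b, hb, hab⟩ := Finset.one_lt_card.1 hdeg
    rw [SimpleGraph.mem_neighborFinset] at ha hb
    obtain ⟨i, rfl⟩ := hcon a ha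
    obtain ⟨j, rfl⟩ := hcon b hb
    rw [h2, pathGraph_adj] at ha hb
    simp only [Fin.val_last] at ha hb
    exact hab (congrArg φ (Fin.ext (by omega)))
  have hu1 : G.degree u ≤ 1 := by
    by_contra! hcon
    exact hur (h3 hcon)
  have huv : ∀ v, G.Adj u v ↔ v = φ (Fin.last p) := by
    intro v
    constructor
    · intro hv
      rw [← SimpleGraph.card_neighborFinset_eq_degree] at hu1
      exact Finset.card_le_one.1 hu1 v (by simpa using hv) _ (by simpa using hu.symm)
    · rintro rfl
      exact hu.symm
  refine ⟨u, ?_, ?_, ?_⟩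
  · exact Fin.snoc_injective_iff.2 ⟨h1, hur⟩
  · intro i j
    induction i using Fin.lastCases with
    | last =>
      induction j using Fin.lastCases with
      | last => simp
      | cast j =>
        simp only [Fin.snoc_last, Fin.snoc_castSucc, huv, h1.eq_iff, pathGraph_adj, Fin.ext_iff,
          Fin.val_last, Fin.val_castSucc]
        omega
    | cast i =>
      induction j using Fin.lastCases with
      | last =>
        simp only [Fin.snoc_last, Fin.snoc_castSucc, G.adj_comm _ u, huv, h1.eq_iff,
          pathGraph_adj, Fin.ext_iff, Fin.val_last, Fin.val_castSucc]
        omega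
      | cast j =>
        simp only [Fin.snoc_castSucc, h2, pathGraph_adj, Fin.val_castSucc]
  · intro v hv
    obtain ⟨i, rfl⟩ := h3 hv
    exact ⟨i.castSucc, by simp⟩

/-- A non-spine vertex has exactly one neighbour, and this neighbour is on the spine: two adjacent
leaves would form a whole component, so the graph would have only two vertices. -/
lemma exists_pendant_neighbor [Fintype V] {G : SimpleGraph V} (hG : G.Connected)
    (hcard : 3 ≤ Fintype.card V) {u : V} (hu : u ∉ G.spine) :
    ∃ v ∈ G.spine, ∀ w, G.Adj u w ↔ w = v := by
  have : Nontrivial V := Fintype.one_lt_card_iff_nontrivial.1 (by omega)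
  have hle : ∀ a, a ∉ G.spine → ∀ b c, G.Adj a b → G.Adj a c → b = c := by
    intro a ha b c hb hc
    have ha' : G.degree a ≤ 1 := by
      by_contra! hcon
      exact ha hcon
    rw [← SimpleGraph.card_neighborFinset_eq_degree] at ha'
    exact Finset.card_le_one.1 ha' b (by simpa using hb) c (by simpa using hc)
  obtain ⟨v, hv⟩ := hG.preconnected.exists_adj_of_nontrivial u
  refine ⟨v, ?_, fun w => ⟨fun hw => hle u hu w v hw hv, fun hw => hw ▸ hv⟩⟩
  by_contra hvs
  -- If `v` were a leaf too, `{u, v}` would be closed under adjacency, hence everything.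
  have hclosed : ∀ w, G.Reachable u w → w = u ∨ w = v := by
    rintro w ⟨q⟩
    have key : ∀ {a b : V} (q : G.Walk a b), (a = u ∨ a = v) → (b = u ∨ b = v) := by
      intro a b q
      induction q with
      | nil => exact id
      | cons hadj _ ih =>
        rintro (rfl | rfl)
        · exact ih (Or.inr (hle _ hu _ _ hadj hv))
        · exact ih (Or.inl (hle _ hvs _ _ hadj hv.symm))
    exact key q (Or.inl rfl)
  have hsub : (Finset.univ : Finset V) ⊆ {u, v} := by
    intro w _
    simpa using hclosed w (hG.preconnected u w)
  have := (Finset.card_le_card hsub).trans Finset.card_le_two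
  rw [Finset.card_univ] at this
  omega

/-- A path consisting of spine vertices can be extended by a leaf at one end (`k = 1`) or at both
ends (`k = 2`). -/
lemma exists_isSpinePath [Fintype V] {G : SimpleGraph V} {s : ℕ} {φ : Fin s → V} (hs : 0 < s)
    (h : IsSpinePath G φ) (hspine : ∀ i, φ i ∈ G.spine) {k : ℕ} (hk : k ≤ 2) :
    ∃ χ : Fin (s + k) → V, IsSpinePath G χ := by
  obtain ⟨p, rfl⟩ : ∃ p, s = p + 1 := ⟨s - 1, by omega⟩
  obtain ⟨u, hu⟩ := h.extend (hspine _)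
  have hlast : (Fin.snoc (α := fun _ => V) φ u ∘ Fin.rev) (Fin.last (p + 1)) = φ 0 := by
    simp only [Function.comp, Fin.rev_last]
    exact Fin.snoc_castSucc (α := fun _ => V) u φ 0
  obtain ⟨v, hv⟩ := hu.rev.extend (hlast ▸ hspine 0)
  interval_cases k
  · exact ⟨_, h⟩
  · exact ⟨_, hu⟩
  · exact ⟨_, hv⟩

/-- Let `C` be a caterpillar whose spine has order `s` and let `k ∈ {0, 1, 2}`.
If the path graph on `s + k` vertices is weighted-`1`-antimagic, then `C` is
`1`-antimagic. -/
theorem caterpillar_isAntimagic_one_of_pathGraph_isWeightedAntimagic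
    [Fintype V] (G : SimpleGraph V) (hC : G.IsCaterpillar)
    (s k : ℕ) (hs : s = G.spineOrder) (hk : k ≤ 2)
    (hP : (pathGraph (s + k)).IsWeightedAntimagic 1) :
    G.IsAntimagic 1 := by
  obtain ⟨hT, hcard, ⟨ι⟩⟩ := hC
  have hpn := fun {u : V} => exists_pendant_neighbor (u := u) hT.connected hcard
  rw [← hs] at ι
  set φ : Fin s → V := fun i => (ι.symm i : V) with hφ
  have hspine : ∀ i, φ i ∈ G.spine := fun i => (ι.symm i).2
  have hφpath : IsSpinePath G φ := by
    refine ⟨Subtype.val_injective.comp ι.symm.injective, fun i j => ?_, fun v hv => ?_⟩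
    · exact ι.symm.map_adj_iff
    · exact ⟨ι ⟨v, hv⟩, by simp [hφ]⟩
  have hs0 : 0 < s := by
    obtain ⟨u⟩ : Nonempty V := Fintype.card_pos_iff.1 (by omega)
    obtain ⟨v, hv⟩ : G.spine.Nonempty := by
      by_cases hu : u ∈ G.spine
      · exact ⟨u, hu⟩
      · obtain ⟨v, hv, -⟩ := hpn hu
        exact ⟨v, hv⟩
    exact Fin.pos (ι ⟨v, hv⟩)
  obtain ⟨χ, hinj, hadj, hsub⟩ := exists_isSpinePath hs0 hφpath hspine hk
  refine isAntimagic_one_of_pendant_extension G (pathGraph (s + k)) χ hinj hadj ?_ ?_ hP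
  · intro u hu
    obtain ⟨v, hv, huv⟩ := hpn (fun h => hu (hsub h))
    obtain ⟨x, rfl⟩ := hsub hv
    exact ⟨x, huv⟩
  · intro x
    -- A one-vertex path is the spine of a star; on a longer path no vertex is isolated.
    by_cases h1 : s + k = 1
    · have hall : ∀ v ∈ G.spine, v = χ x := by
        intro v hv
        obtain ⟨y, rfl⟩ := hsub hv
        exact congrArg χ (Fin.ext (by omega))
      right
      refine ⟨fun u hu => ?_, ?_⟩
      · obtain ⟨v, hv, huv⟩ := hpn (fun h => hu (hsub h))
        exact ((huv _).2 (hall v hv).symm).symm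
      · have hmem := hspine ⟨0, hs0⟩
        rw [hall _ hmem] at hmem
        exact hmem
    · left
      by_cases hx : (x : ℕ) = 0
      · exact ⟨⟨1, by omega⟩, by rw [pathGraph_adj]; simp; omega⟩
      · exact ⟨⟨x - 1, by omega⟩, by rw [pathGraph_adj]; simp; omega⟩
end

section
/- Let C be a caterpillar with ℓ leaves whose spine has order s. If ℓ ≥ ⌊(3s+1)/2⌋, then the leaves excess of C satisfies E(C) ≥ ⌊(s-1)/2⌋ - 1. -/
/-!
The bound comes from double counting degrees; it holds for every tree of order at least 3.
Let `n = s + ℓ` be the order, so the degrees sum to `2 (n - 1)`. Every vertex satisfies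
`d(v) + 2 * [d(v) = 1] ≤ 3 + max (d(v) - 3) 0`; summing over all vertices gives
`2 (n - 1) + 2 ℓ ≤ 3 n + E`, that is `E ≥ ℓ - s - 2`. The hypothesis on `ℓ` then yields
`E ≥ ⌊(s + 1) / 2⌋ - 2 = ⌊(s - 1) / 2⌋ - 1`.
-/

open Finset SimpleGraph
open scoped Classical

variable {V : Type*}

/-- The leaves excess of a caterpillar: the sum over all vertices of degree at
least 4 of their degree minus 3. -/
noncomputable def SimpleGraph.leavesExcess [Fintype V] (G : SimpleGraph V) : ℕ :=
  ∑ v ∈ Finset.univ.filter (fun v => 4 ≤ G.degree v), (G.degree v - 3)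

/-- A tree with at least two vertices has no isolated vertex, so its vertices split into
leaves and spine vertices. -/
theorem card_eq_leaves_add_spineOrder [Fintype V] (G : SimpleGraph V)
    (hT : G.IsTree) (hn : 2 ≤ Fintype.card V) :
    Fintype.card V = (Finset.univ.filter fun v => G.degree v = 1).card + G.spineOrder := by
  have hnt : Nontrivial V := Fintype.one_lt_card_iff_nontrivial.mp hn
  have hpos : ∀ v, 0 < G.degree v := fun v => hT.connected.preconnected.degree_pos_of_nontrivial v
  have hs : G.spineOrder = (Finset.univ.filter fun v => ¬ G.degree v = 1).card := by
    unfold SimpleGraph.spineOrder SimpleGraph.spine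
    rw [Nat.card_eq_fintype_card, ← Set.toFinset_card]
    congr 1
    ext v
    have := hpos v
    simp only [Set.mem_toFinset, Set.mem_ofPred_eq, Finset.mem_filter, Finset.mem_univ, true_and]
    omega
  rw [hs, Finset.card_filter_add_card_filter_not, Finset.card_univ]

/-- Let `C` be a caterpillar with `ℓ` leaves whose spine has order `s`. If
`ℓ ≥ ⌊(3s+1)/2⌋`, then the leaves excess of `C` is at least `⌊(s-1)/2⌋ - 1`. -/
theorem leavesExcess_ge [Fintype V] (G : SimpleGraph V)
    (hC : G.IsCaterpillar) (ℓ s : ℕ)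
    (hl : ℓ = (Finset.univ.filter fun v => G.degree v = 1).card)
    (hs : s = G.spineOrder)
    (hℓ : (3 * s + 1) / 2 ≤ ℓ) :
    (s - 1) / 2 - 1 ≤ G.leavesExcess := by
  obtain ⟨hT, hn, -⟩ := hC
  have hcard := card_eq_leaves_add_spineOrder G hT (by omega)
  have hedge := hT.card_edgeFinset
  have hdeg := G.sum_degrees_eq_twice_card_edges
  have hsum : ∑ v, (G.degree v + 2 * (if G.degree v = 1 then 1 else 0)) ≤
      ∑ v, (3 + if 4 ≤ G.degree v then G.degree v - 3 else 0) := by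
    refine Finset.sum_le_sum fun v _ => ?_
    split_ifs <;> omega
  rw [Finset.sum_add_distrib, Finset.sum_add_distrib, ← Finset.mul_sum, ← Finset.card_filter,
    ← Finset.sum_filter, Finset.sum_const, Finset.card_univ, smul_eq_mul, ← hl] at hsum
  rw [← hl, ← hs] at hcard
  unfold SimpleGraph.leavesExcess
  omega
end
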